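/- Let 0 < α < 1 and p = n^{-α}. Then asymptotically almost surely, the random graph G(n,p) contains no two distinct vertices u, v such that N(u) \ {v} ⊆ N(v) \ {u}. That is, the probability that there exist distinct u, v with N(u) \ {v} ⊆ N(v) \ {u} tends to 0 as n → ∞. -/

import Mathlib

open Filter

-- `graphProb n p A` is the probability that the Erdős–Rényi random graph `G(n,p)` (each
-- of the `C(n,2)` possible edges present independently with probability `p`) satisfies
-- the property `A`.
open Classical in
noncomputable def graphProb (n : ℕ) (p : ℝ) (A : SimpleGraph (Fin n) → Prop) : ℝ :=
  ∑ G : SimpleGraph (Fin n),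
    if A G then p ^ (Nat.card G.edgeSet) * (1 - p) ^ (n.choose 2 - Nat.card G.edgeSet) else 0

/-!
Fix distinct `u`, `v`. Their adjacencies to the remaining `n - 2` vertices `w` are independent, and
each `w` satisfies `u ∼ w → v ∼ w` with probability `1 - p (1 - p)`. Hence
`N(u) \ {v} ⊆ N(v) \ {u}` has probability `(1 - p (1 - p)) ^ (n - 2)`, and the union bound over
pairs gives at most `n² (1 - p (1 - p)) ^ (n - 2) ≤ e² exp (2 log n - n p (1 - p))`. This tends to
zero as soon as `n p (1 - p) - 2 log n → ∞`; for `p = n ^ (-α)` the first term has order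
`n ^ (1 - α)`, which dominates the logarithm.
-/

section Probability

open MeasureTheory ProbabilityTheory Measure
open scoped SimpleGraph unitInterval

section Independence

variable {Ω ι : Type*} {mΩ : MeasurableSpace Ω} {P : Measure Ω}

lemma hasLaw_of_hasLaw_infinitePi {𝓧 : ι → Type*} [∀ i, MeasurableSpace (𝓧 i)]
    {μ : ∀ i, Measure (𝓧 i)} [∀ i, IsProbabilityMeasure (μ i)] {X : ∀ i, Ω → 𝓧 i}
    (hX : HasLaw (fun ω i ↦ X i ω) (infinitePi μ) P) (i : ι) : HasLaw (X i) (μ i) P :=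
  (measurePreserving_eval_infinitePi μ i).hasLaw.comp hX

lemma iIndepFun_of_hasLaw_infinitePi {𝓧 : ι → Type*} [∀ i, MeasurableSpace (𝓧 i)]
    {μ : ∀ i, Measure (𝓧 i)} [∀ i, IsProbabilityMeasure (μ i)] {X : ∀ i, Ω → 𝓧 i}
    (hX : HasLaw (fun ω i ↦ X i ω) (infinitePi μ) P) : iIndepFun X P :=
  have := hX.isProbabilityMeasure
  (iIndepFun_iff_hasLaw_Pi_infinitePi (hasLaw_of_hasLaw_infinitePi hX) hX.aemeasurable).2 hX

lemma iIndepFun_curry {κ : ι → Type*} {𝓧 : ∀ i, κ i → Type*}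
    [∀ i j, MeasurableSpace (𝓧 i j)] {X : ∀ i j, Ω → 𝓧 i j}
    (mX : ∀ i j, Measurable (X i j))
    (hX : iIndepFun (fun (ij : (i : ι) × κ i) ↦ X ij.1 ij.2) P) :
    iIndepFun (fun i ω j ↦ X i j ω) P := by
  have := hX.isProbabilityMeasure
  have h_prob (i : ι) (j : κ i) : IsProbabilityMeasure (P.map (X i j)) :=
    isProbabilityMeasure_map (mX i j).aemeasurable
  have h_row (i : ι) : P.map (fun ω j ↦ X i j ω) = infinitePi fun j ↦ P.map (X i j) :=
    (hX.precomp sigma_mk_injective).map_fun_eq_infinitePi_map (mX i)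
  rw [iIndepFun_iff_map_fun_eq_infinitePi_map (by fun_prop)]
  calc P.map (fun ω i j ↦ X i j ω)
      = (P.map fun ω (ij : (i : ι) × κ i) ↦ X ij.1 ij.2 ω).map (MeasurableEquiv.piCurry 𝓧) := by
        rw [map_map (by fun_prop) (by fun_prop)]
        rfl
    _ = infinitePi fun i ↦ infinitePi fun j ↦ P.map (X i j) := by
        rw [hX.map_fun_eq_infinitePi_map fun ij ↦ mX ij.1 ij.2,
          infinitePi_map_piCurry fun i j ↦ P.map (X i j)]
    _ = infinitePi fun i ↦ P.map fun ω j ↦ X i j ω := by simp only [h_row]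

end Independence

lemma hasLaw_mem_setBernoulli {ι : Type*} (u : Set ι) (p : I) :
    HasLaw (fun s i ↦ i ∈ s)
      (infinitePi fun i ↦ unitInterval.toNNReal p • dirac (i ∈ u) +
        unitInterval.toNNReal (σ p) • dirac False) setBer(u, p) where
  map_eq := by
    rw [setBernoulli_eq_map, map_map (by fun_prop) (by fun_prop)]
    exact map_id

section Countable

variable {V : Type*} [Countable V]

lemma hasLaw_edgeSet_binomialRandom (p : I) :
    HasLaw SimpleGraph.edgeSet setBer(Sym2.diagSetᶜ, p) G(V, p) where
  map_eq := by
    rw [SimpleGraph.binomialRandom, SimpleGraph.measurableEmbedding_edgeSet.map_comap]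
    refine restrict_eq_self_of_ae_mem ?_
    filter_upwards [setBernoulli_ae_subset] with s hs
    exact ⟨.fromEdgeSet s, by simpa [← Set.disjoint_compl_right_iff_subset] using hs⟩

lemma hasLaw_mem_edgeSet_binomialRandom (p : I) :
    HasLaw (fun (G : SimpleGraph V) e ↦ e ∈ G.edgeSet)
      (infinitePi fun e ↦ unitInterval.toNNReal p • dirac (e ∈ Sym2.diagSetᶜ) +
        unitInterval.toNNReal (σ p) • dirac False) G(V, p) :=
  (hasLaw_mem_setBernoulli _ p).comp (hasLaw_edgeSet_binomialRandom p)

lemma iIndepFun_mem_edgeSet_binomialRandom (p : I) :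
    iIndepFun (fun e (G : SimpleGraph V) ↦ e ∈ G.edgeSet) G(V, p) :=
  iIndepFun_of_hasLaw_infinitePi (hasLaw_mem_edgeSet_binomialRandom p)

lemma iIndepFun_adj_binomialRandom (p : I) (U : Set V) :
    iIndepFun (fun (w : ↥Uᶜ) (G : SimpleGraph V) (u : U) ↦ G.Adj u w) G(V, p) := by
  have h_inj : Function.Injective fun wu : (_ : ↥Uᶜ) × U ↦ s((wu.2 : V), (wu.1 : V)) := by
    rintro ⟨⟨w, hw⟩, ⟨u, hu⟩⟩ ⟨⟨w', hw'⟩, ⟨u', hu'⟩⟩ h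
    rcases Sym2.eq_iff.1 h with ⟨rfl, rfl⟩ | ⟨rfl, rfl⟩
    · rfl
    · exact absurd hu hw'
  exact iIndepFun_curry (X := fun (w : ↥Uᶜ) (u : U) (G : SimpleGraph V) ↦ G.Adj u w)
    (by fun_prop) ((iIndepFun_mem_edgeSet_binomialRandom p).precomp h_inj)

lemma binomialRandom_real_adj (p : I) {u v : V} (huv : u ≠ v) :
    G(V, p).real {G | G.Adj u v} = p := by
  have h_law := hasLaw_of_hasLaw_infinitePi (hasLaw_mem_edgeSet_binomialRandom p) s(u, v)
  simpa [huv, measureReal_def, Set.indicator] using h_law.measureReal_eq (p := id) .of_discrete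

lemma binomialRandom_real_adj_imp_adj (p : I) {u v w : V} (huv : u ≠ v) (huw : u ≠ w)
    (hvw : v ≠ w) : G(V, p).real {G | G.Adj u w → G.Adj v w} = 1 - p * (1 - p) := by
  have h_indep : IndepFun (fun G : SimpleGraph V ↦ G.Adj u w) (fun G ↦ G.Adj v w) G(V, p) :=
    (iIndepFun_mem_edgeSet_binomialRandom p).indepFun (i := s(u, w)) (j := s(v, w))
      (Sym2.congr_left.not.2 huv)
  have h_meas (x y : V) : MeasurableSet {G : SimpleGraph V | G.Adj x y} :=
    measurableSet_setOfPred.2 (by fun_prop)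
  calc G(V, p).real {G | G.Adj u w → G.Adj v w}
      = 1 - G(V, p).real ({G | G.Adj u w} ∩ {G | G.Adj v w}ᶜ) := by
        rw [← probReal_compl_eq_one_sub ((h_meas u w).inter (h_meas v w).compl)]
        congr 1
        ext G
        simp
    _ = 1 - G(V, p).real {G | G.Adj u w} * G(V, p).real {G | G.Adj v w}ᶜ := by
        simp only [measureReal_def, ← ENNReal.toReal_mul]
        exact congrArg (fun x ↦ 1 - x.toReal) <| h_indep.measure_inter_preimage_eq_mul
          {A | A} {A | ¬A} .of_discrete .of_discrete
    _ = 1 - p * (1 - p) := by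
        rw [probReal_compl_eq_one_sub (h_meas v w), binomialRandom_real_adj p huw,
          binomialRandom_real_adj p hvw]

end Countable

lemma neighborSet_sdiff_subset_iff {V : Type*} {G : SimpleGraph V} {u v : V} :
    G.neighborSet u \ {v} ⊆ G.neighborSet v \ {u} ↔
      ∀ w : ↥({u, v} : Set V)ᶜ, G.Adj u w → G.Adj v w := by
  constructor
  · rintro h ⟨w, hw⟩ huw
    exact (h ⟨huw, fun hwv ↦ hw (.inr hwv)⟩).1
  · rintro h w ⟨huw, hwv⟩
    have hwu : w ≠ u := G.ne_of_adj huw |>.symm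
    exact ⟨h ⟨w, by simp_all⟩ huw, hwu⟩

section Fintype

variable {V : Type*} [Fintype V]

lemma binomialRandom_real_neighborSet_sdiff_subset (p : I) {u v : V} (huv : u ≠ v) :
    G(V, p).real {G | G.neighborSet u \ {v} ⊆ G.neighborSet v \ {u}} =
      (1 - p * (1 - p) : ℝ) ^ (Fintype.card V - 2) := by
  classical
  have h_prod : G(V, p) (⋂ w : ↥({u, v} : Set V)ᶜ, {G | G.Adj u w → G.Adj v w}) =
      ∏ w : ↥({u, v} : Set V)ᶜ, G(V, p) {G | G.Adj u w → G.Adj v w} :=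
    (iIndepFun_adj_binomialRandom p {u, v}).meas_iInter fun w ↦
      ⟨{A | A ⟨u, by simp⟩ → A ⟨v, by simp⟩}, measurableSet_setOfPred.2 (by fun_prop), rfl⟩
  have h_factor (w : ↥({u, v} : Set V)ᶜ) :
      G(V, p).real {G | G.Adj u w → G.Adj v w} = 1 - p * (1 - p) :=
    binomialRandom_real_adj_imp_adj p huv (fun h ↦ w.2 (.inl h.symm)) fun h ↦ w.2 (.inr h.symm)
  have h_card : Fintype.card ↥({u, v} : Set V)ᶜ = Fintype.card V - 2 := by
    rw [Fintype.card_compl_set, Set.card_insert _ (by simpa using huv)]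
    simp
  calc G(V, p).real {G | G.neighborSet u \ {v} ⊆ G.neighborSet v \ {u}}
      = ∏ w : ↥({u, v} : Set V)ᶜ, G(V, p).real {G | G.Adj u w → G.Adj v w} := by
        simp only [measureReal_def, neighborSet_sdiff_subset_iff, Set.ofPred_forall, h_prod,
          ENNReal.toReal_prod]
    _ = (1 - p * (1 - p) : ℝ) ^ (Fintype.card V - 2) := by
        rw [Finset.prod_congr rfl fun w _ ↦ h_factor w, Finset.prod_const, Finset.card_univ,
          h_card]

lemma binomialRandom_real_exists_neighborSet_sdiff_subset_le (p : I) :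
    G(V, p).real {G | ∃ u v, u ≠ v ∧ G.neighborSet u \ {v} ⊆ G.neighborSet v \ {u}} ≤
      Fintype.card V ^ 2 * (1 - p * (1 - p) : ℝ) ^ (Fintype.card V - 2) := by
  classical
  have h_nonneg : 0 ≤ (1 - p * (1 - p) : ℝ) :=
    sub_nonneg.2 (mul_le_one₀ p.2.2 (sub_nonneg.2 p.2.2) (sub_le_self 1 p.2.1))
  have h_union :
      {G : SimpleGraph V | ∃ u v, u ≠ v ∧ G.neighborSet u \ {v} ⊆ G.neighborSet v \ {u}} =
        ⋃ uv ∈ (Finset.univ : Finset V).offDiag,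
          {G | G.neighborSet uv.1 \ {uv.2} ⊆ G.neighborSet uv.2 \ {uv.1}} := by
    ext G
    simp
  calc G(V, p).real {G | ∃ u v, u ≠ v ∧ G.neighborSet u \ {v} ⊆ G.neighborSet v \ {u}}
      ≤ ∑ uv ∈ (Finset.univ : Finset V).offDiag,
          G(V, p).real {G | G.neighborSet uv.1 \ {uv.2} ⊆ G.neighborSet uv.2 \ {uv.1}} :=
        h_union ▸ measureReal_biUnion_finset_le _ _
    _ = (Finset.univ : Finset V).offDiag.card *
          (1 - p * (1 - p) : ℝ) ^ (Fintype.card V - 2) := by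
        rw [Finset.sum_congr rfl fun uv huv ↦ binomialRandom_real_neighborSet_sdiff_subset p
          (Finset.mem_offDiag.1 huv).2.2, Finset.sum_const, nsmul_eq_mul]
    _ ≤ Fintype.card V ^ 2 * (1 - p * (1 - p) : ℝ) ^ (Fintype.card V - 2) := by
        gcongr
        rw [Finset.offDiag_card, Finset.card_univ, sq]
        exact_mod_cast Nat.sub_le _ _

end Fintype

lemma graphProb_eq_binomialRandom_real (n : ℕ) (p : I) (A : SimpleGraph (Fin n) → Prop) :
    graphProb n p A = G(Fin n, p).real {G | A G} := by
  classical
  have : MeasurableSingletonClass (SimpleGraph (Fin n)) :=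
    ⟨fun G ↦ by
      rw [← Set.preimage_image_eq {G} SimpleGraph.edgeSet_injective]
      exact SimpleGraph.measurable_edgeSet .of_discrete⟩
  have h_singleton (G : SimpleGraph (Fin n)) : G(Fin n, p).real {G} =
      (p : ℝ) ^ Nat.card G.edgeSet * (1 - p) ^ (n.choose 2 - Nat.card G.edgeSet) := by
    rw [Nat.card_coe_set_eq]
    simp [measureReal_def]
  have h_coe : {G | A G} = ((Finset.univ.filter A : Finset (SimpleGraph (Fin n))) : Set _) := by
    simp
  rw [graphProb, ← Finset.sum_filter, h_coe, ← sum_measureReal_singleton]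
  simp only [h_singleton]

end Probability

section Asymptotics

open Real Topology

lemma pow_mul_one_sub_pow_le_exp {n : ℕ} (hn : n ≠ 0) (k : ℕ) {q : ℝ} (hq : q ≤ 1) :
    (n : ℝ) ^ k * (1 - q) ^ (n - k) ≤ exp k * exp (-(n * q - k * log n)) := by
  have hn_pos : (0 : ℝ) < n := by positivity
  have : 0 ≤ 1 - q := sub_nonneg.2 hq
  have h_le_add : (n : ℝ) ≤ ↑(n - k) + k := by exact_mod_cast le_tsub_add
  have h_sub_le : (↑(n - k) : ℝ) ≤ n := by exact_mod_cast n.sub_le k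
  have h_mul_le : n * q ≤ ↑(n - k) * q + k := by
    rcases le_total 0 q with h_nonneg | h_nonpos
    · nlinarith [mul_le_mul_of_nonneg_right h_le_add h_nonneg,
        mul_le_mul_of_nonneg_left hq k.cast_nonneg]
    · nlinarith [mul_le_mul_of_nonpos_right h_sub_le h_nonpos]
  calc (n : ℝ) ^ k * (1 - q) ^ (n - k)
      ≤ exp (k * log n) * exp (-q) ^ (n - k) := by
        rw [exp_nat_mul, exp_log hn_pos]
        gcongr
        exact one_sub_le_exp_neg q
    _ = exp (k * log n - ↑(n - k) * q) := by
        rw [← exp_nat_mul, ← exp_add]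
        ring_nf
    _ ≤ exp (k + -(n * q - k * log n)) := by
        gcongr
        linarith
    _ = exp k * exp (-(n * q - k * log n)) := exp_add _ _

lemma tendsto_pow_mul_one_sub_pow_zero (k : ℕ) {q : ℕ → ℝ} (hq : ∀ᶠ n in atTop, q n ≤ 1)
    (h : Tendsto (fun n : ℕ ↦ n * q n - k * log n) atTop atTop) :
    Tendsto (fun n : ℕ ↦ (n : ℝ) ^ k * (1 - q n) ^ (n - k)) atTop (𝓝 0) := by
  have h_exp : Tendsto (fun n : ℕ ↦ exp k * exp (-(n * q n - k * log n))) atTop (𝓝 0) := by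
    simpa using (tendsto_exp_neg_atTop_nhds_zero.comp h).const_mul (exp k)
  refine squeeze_zero' ?_ ?_ h_exp
  · filter_upwards [hq] with n hn
    have := sub_nonneg.2 hn
    positivity
  · filter_upwards [hq, eventually_ne_atTop 0] with n hn hn0
    exact pow_mul_one_sub_pow_le_exp hn0 k hn

lemma eventually_mem_Icc_of_tendsto_mul_one_sub_sub_log {p : ℕ → ℝ} {c : ℝ} (hc : 0 ≤ c)
    (h : Tendsto (fun n : ℕ ↦ n * (p n * (1 - p n)) - c * log n) atTop atTop) :
    ∀ᶠ n in atTop, p n ∈ Set.Icc 0 1 := by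
  filter_upwards [h.eventually_gt_atTop 0] with n hn
  have h_log : 0 ≤ c * log n := mul_nonneg hc (log_natCast_nonneg n)
  have h_pos : 0 < p n * (1 - p n) :=
    pos_of_mul_pos_right (h_log.trans_lt (sub_pos.1 hn)) n.cast_nonneg
  constructor <;> nlinarith

lemma tendsto_mul_rpow_neg_mul_one_sub_sub_log_atTop {α : ℝ} (h0 : 0 < α) (h1 : α < 1) (c : ℝ) :
    Tendsto (fun x : ℝ ↦ x * (x ^ (-α) * (1 - x ^ (-α))) - c * log x) atTop atTop := by
  have hβ : 0 < 1 - α := sub_pos.2 h1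
  have h_log : Tendsto (fun x : ℝ ↦ log x / x ^ (1 - α)) atTop (𝓝 0) :=
    (isLittleO_log_rpow_atTop hβ).tendsto_div_nhds_zero
  have h_factor : Tendsto (fun x : ℝ ↦ 1 - x ^ (-α) - c * (log x / x ^ (1 - α))) atTop (𝓝 1) := by
    simpa using ((tendsto_rpow_neg_atTop h0).const_sub 1).sub (h_log.const_mul c)
  refine ((tendsto_rpow_atTop hβ).atTop_mul_pos one_pos h_factor).congr' ?_
  filter_upwards [eventually_gt_atTop 0] with x hx
  have h_rpow : x ^ (1 - α) = x * x ^ (-α) := by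
    rw [sub_eq_add_neg, rpow_add hx, rpow_one]
  rw [h_rpow]
  field_simp

end Asymptotics

theorem aas_no_nested_neighborhoods_general (p : ℕ → ℝ)
    (h : Tendsto (fun n : ℕ ↦ n * (p n * (1 - p n)) - 2 * Real.log n) atTop atTop) :
    Tendsto (fun n : ℕ ↦ graphProb n (p n) (fun G ↦
        ∃ u v : Fin n, u ≠ v ∧ G.neighborSet u \ {v} ⊆ G.neighborSet v \ {u}))
      atTop (nhds 0) := by
  have hp : ∀ᶠ n in atTop, p n ∈ Set.Icc 0 1 :=
    eventually_mem_Icc_of_tendsto_mul_one_sub_sub_log zero_le_two h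
  have h_mul (n : ℕ) : p n * (1 - p n) ≤ 1 := by nlinarith [sq_nonneg (p n)]
  refine squeeze_zero' ?_ ?_ (tendsto_pow_mul_one_sub_pow_zero 2 (.of_forall h_mul) h)
  · filter_upwards [hp] with n hn
    rw [graphProb_eq_binomialRandom_real n ⟨p n, hn⟩]
    exact MeasureTheory.measureReal_nonneg
  · filter_upwards [hp] with n hn
    rw [graphProb_eq_binomialRandom_real n ⟨p n, hn⟩]
    simpa using binomialRandom_real_exists_neighborSet_sdiff_subset_le (V := Fin n) ⟨p n, hn⟩

/-- For `0 < α < 1` and `p = n^{-α}`, a.a.s. `G(n,p)` contains no two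
distinct vertices `u, v` with `N(u) \ {v} ⊆ N(v) \ {u}`. -/
theorem aas_no_nested_neighborhoods (α : ℝ) (h0 : 0 < α) (h1 : α < 1) :
    Tendsto (fun n : ℕ => graphProb n ((n : ℝ) ^ (-α)) (fun G =>
        ∃ u v : Fin n, u ≠ v ∧ G.neighborSet u \ {v} ⊆ G.neighborSet v \ {u}))
      atTop (nhds 0) :=
  aas_no_nested_neighborhoods_general _
    ((tendsto_mul_rpow_neg_mul_one_sub_sub_log_atTop h0 h1 2).comp tendsto_natCast_atTop_atTop)
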